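/- arXiv:2512.00584 — 3 statements merged into one kernel-verified Lean document; each statement's English description precedes it below -/
import Mathlib

section
/- Let K be an algebraically closed field, S = K[X_0,…,X_n], < a monomial order with X_0 > ⋯ > X_n, and I ⊆ S a homogeneous ideal with in_<(I) = I_Δ the Stanley–Reisner ideal of a graph Δ on {0,…,n} having every i as a vertex. Assume X = V(I) ⊆ P^n is a connected projective curve. Then the point P_0 = [1:0:⋯:0] ∈ X is a nonsingular point of X if and only if 0 is a free vertex of the graph Δ. -/
open MvPolynomial

/-- The leading exponent (multidegree) of a multivariate polynomial with respect to a
monomial order: the maximum of its support. (It is `0` for the zero polynomial.) -/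
noncomputable def MonomialOrder.mdeg {σ : Type*} (m : MonomialOrder σ) {R : Type*}
    [CommSemiring R] (f : MvPolynomial σ R) : σ →₀ ℕ :=
  m.toSyn.symm (f.support.sup fun e => m.toSyn e)

/-- The initial ideal of an ideal `I` with respect to a monomial order. -/
noncomputable def initialIdeal {σ : Type*} {K : Type*} [Field K] (m : MonomialOrder σ)
    (I : Ideal (MvPolynomial σ K)) : Ideal (MvPolynomial σ K) :=
  Ideal.span {g | ∃ f ∈ I, f ≠ 0 ∧ g = monomial (m.mdeg f) (1 : K)}

/-- A monomial order on `X_0, …, X_n` satisfies `X_0 > X_1 > ⋯ > X_n`. -/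
def MonomialOrder.Descending {n : ℕ} (m : MonomialOrder (Fin (n + 1))) : Prop :=
  ∀ i j : Fin (n + 1), i < j →
    m.toSyn (Finsupp.single j 1) < m.toSyn (Finsupp.single i 1)

/-- An ideal is homogeneous (w.r.t. the standard grading) iff it contains all homogeneous
components of its elements. -/
def IsHomog {σ : Type*} {K : Type*} [Field K] (I : Ideal (MvPolynomial σ K)) : Prop :=
  ∀ f ∈ I, ∀ d : ℕ, homogeneousComponent d f ∈ I

/-- An abstract simplicial complex on the vertex set `{0, …, n}`. -/
structure SComplex (n : ℕ) where
  faces : Set (Finset (Fin (n + 1)))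
  down_closed : ∀ {s t : Finset (Fin (n + 1))}, s ∈ faces → t ⊆ s → t ∈ faces

/-- A simplicial complex is 1-dimensional (a graph) if all faces have at most 2 vertices and
some face has exactly 2 vertices. -/
def SComplex.IsGraph {n : ℕ} (Δ : SComplex n) : Prop :=
  (∀ s ∈ Δ.faces, s.card ≤ 2) ∧ ∃ s ∈ Δ.faces, s.card = 2

/-- The Stanley–Reisner ideal of a simplicial complex. -/
noncomputable def SComplex.srIdeal {n : ℕ} (K : Type*) [Field K] (Δ : SComplex n) :
    Ideal (MvPolynomial (Fin (n + 1)) K) :=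
  Ideal.span {g | ∃ s : Finset (Fin (n + 1)), s ∉ Δ.faces ∧ g = ∏ i ∈ s, X i}

/-- A vertex of a graph is free if it belongs to exactly one edge. -/
def SComplex.FreeVertex {n : ℕ} (Δ : SComplex n) (v : Fin (n + 1)) : Prop :=
  ∃! e : Finset (Fin (n + 1)), e ∈ Δ.faces ∧ e.card = 2 ∧ v ∈ e

/-- The (vector representatives of the) points of the projective variety `V(I) ⊆ ℙⁿ`. -/
def projZeros {n : ℕ} {K : Type*} [Field K] (I : Ideal (MvPolynomial (Fin (n + 1)) K)) :
    Set (Fin (n + 1) → K) :=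
  {x | x ≠ 0 ∧ ∀ f ∈ I, eval x f = 0}

/-- The rank at the point `x` of the Jacobian matrix of the ideal `I`. -/
noncomputable def jacobianRank {n : ℕ} {K : Type*} [Field K]
    (I : Ideal (MvPolynomial (Fin (n + 1)) K)) (x : Fin (n + 1) → K) : ℕ :=
  Module.finrank K
    (Submodule.span K {v : Fin (n + 1) → K | ∃ f ∈ I, v = fun i => eval x (pderiv i f)})

/-- The projective variety `V(I)` is connected. -/
def IsConnectedProjVariety {n : ℕ} {K : Type*} [Field K]
    (I : Ideal (MvPolynomial (Fin (n + 1)) K)) : Prop :=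
  (projZeros I).Nonempty ∧
    ∀ J₁ J₂ : Ideal (MvPolynomial (Fin (n + 1)) K), IsHomog J₁ → IsHomog J₂ →
      projZeros I ⊆ projZeros J₁ ∪ projZeros J₂ →
      projZeros I ∩ (projZeros J₁ ∩ projZeros J₂) = ∅ →
      projZeros I ⊆ projZeros J₁ ∨ projZeros I ⊆ projZeros J₂


section helpers

/-- the coordinate point -/
def pt0 (K : Type*) [Field K] (n : ℕ) : Fin (n + 1) → K := fun i => if i = 0 then 1 else 0

/-- dehomogenization -/
noncomputable def deh (K : Type*) [Field K] (n : ℕ) :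
    MvPolynomial (Fin (n + 1)) K →ₐ[K] MvPolynomial (Fin (n + 1)) K :=
  aeval (fun i => if i = 0 then 1 else X i)

variable {K : Type*} [Field K] {n : ℕ}

lemma deh_monomial (e : Fin (n + 1) →₀ ℕ) (c : K) :
    deh K n (monomial e c) = monomial (e.erase 0) c := by
  classical
  rw [deh, aeval_monomial, monomial_eq (s := e.erase 0)]
  congr 1
  rw [Finsupp.prod_fintype _ _ (by simp), Finsupp.prod_fintype _ _ (by simp)]
  apply Finset.prod_congr rfl
  intro i _
  by_cases h : i = 0
  · subst h; simp
  · simp [h, Finsupp.erase_ne h]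

lemma coeff_deh (F : MvPolynomial (Fin (n + 1)) K) (u : Fin (n + 1) →₀ ℕ) :
    coeff u (deh K n F) = ∑ e ∈ F.support, if e.erase 0 = u then coeff e F else 0 := by
  classical
  conv_lhs => rw [F.as_sum]
  rw [map_sum, coeff_sum]
  apply Finset.sum_congr rfl
  intro e _
  rw [deh_monomial, coeff_monomial]

lemma exists_of_mem_support_deh (F : MvPolynomial (Fin (n + 1)) K) (u : Fin (n + 1) →₀ ℕ)
    (hu : coeff u (deh K n F) ≠ 0) : ∃ e, coeff e F ≠ 0 ∧ e.erase 0 = u := by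
  rw [coeff_deh] at hu
  obtain ⟨e, he, h⟩ := Finset.exists_ne_zero_of_sum_ne_zero hu
  refine ⟨e, mem_support_iff.1 he, ?_⟩
  by_contra h'
  simp [h'] at h

lemma eq_of_erase_eq {e e' : Fin (n + 1) →₀ ℕ} (h : e.erase 0 = e'.erase 0)
    (hd : e.degree = e'.degree) : e = e' := by
  have h1 := Finsupp.single_add_erase 0 e
  have h2 := Finsupp.single_add_erase 0 e'
  rw [← h1, ← h2, h] at hd
  simp only [map_add, Finsupp.degree_single] at hd
  rw [← h1, ← h2, h]
  have : e 0 = e' 0 := by omega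
  rw [this]

lemma coeff_deh_erase {F : MvPolynomial (Fin (n + 1)) K} {N : ℕ} (hF : F.IsHomogeneous N)
    {e : Fin (n + 1) →₀ ℕ} (he : coeff e F ≠ 0) : coeff (e.erase 0) (deh K n F) ≠ 0 := by
  rw [coeff_deh, Finset.sum_eq_single e]
  · simpa using he
  · intro e' he' hne
    rw [if_neg]
    intro h
    apply hne
    apply eq_of_erase_eq h
    have h1 : e'.degree = N := by
      by_contra hh
      exact (mem_support_iff.1 he') (hF.coeff_eq_zero hh)
    have h2 : e.degree = N := by
      by_contra hh
      exact he (hF.coeff_eq_zero hh)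
    rw [h1, h2]
  · intro h
    exact absurd (mem_support_iff.2 he) h

lemma constantCoeff_deh (f : MvPolynomial (Fin (n + 1)) K) :
    coeff 0 (deh K n f) = eval (pt0 K n) f := by
  have : (constantCoeff.comp (deh K n).toRingHom) = eval (pt0 K n) := by
    apply MvPolynomial.ringHom_ext
    · intro r; simp [deh]
    · intro i
      by_cases h : i = 0 <;> simp [deh, pt0, h]
  have := congrArg (fun g => g f) this
  simpa [constantCoeff_eq] using this

lemma toSyn_le_single (m : MonomialOrder (Fin (n + 1))) (hm : m.Descending)
    (w : Fin (n + 1) →₀ ℕ) : m.toSyn w ≤ m.toSyn (Finsupp.single 0 w.degree) := by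
  induction w using Finsupp.induction_linear with
  | zero => simp
  | add f g hf hg =>
    rw [map_add Finsupp.degree, Finsupp.single_add, map_add, map_add]
    exact add_le_add hf hg
  | single i k =>
    rw [Finsupp.degree_single, show Finsupp.single i k = k • Finsupp.single i 1 by simp,
      show (Finsupp.single 0 k : Fin (n + 1) →₀ ℕ) = k • Finsupp.single 0 1 by simp, map_nsmul, map_nsmul]
    apply nsmul_le_nsmul_right
    rcases eq_or_ne i 0 with h | h
    · rw [h]
    · exact (hm 0 i (Fin.pos_of_ne_zero h)).le

lemma toSyn_le_of_erase (m : MonomialOrder (Fin (n + 1))) (hm : m.Descending)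
    {e e1 : Fin (n + 1) →₀ ℕ} (hd : e.degree = e1.degree) (h : e1.erase 0 ≤ e.erase 0) :
    m.toSyn e ≤ m.toSyn e1 := by
  obtain ⟨w, hw⟩ := exists_add_of_le h
  have h1 := Finsupp.single_add_erase 0 e
  have h2 := Finsupp.single_add_erase 0 e1
  rw [← h1, ← h2, hw] at hd
  simp only [map_add, Finsupp.degree_single] at hd
  have h3 : e1 0 = e 0 + w.degree := by omega
  rw [← h1, ← h2, hw, h3, Finsupp.single_add]
  simp only [map_add]
  rw [add_assoc, add_comm (m.toSyn (Finsupp.single 0 w.degree)), ← add_assoc]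
  rw [← add_assoc]
  gcongr
  exact toSyn_le_single m hm w

lemma eval_pt0 (g : MvPolynomial (Fin (n + 1)) K) (d : ℕ)
    (h : ∀ k, k ≠ d → coeff (Finsupp.single 0 k) g = 0) :
    eval (pt0 K n) g = coeff (Finsupp.single 0 d) g := by
  rw [← constantCoeff_deh, coeff_deh]
  have key : ∀ e : Fin (n + 1) →₀ ℕ, e.erase 0 = 0 → e = Finsupp.single 0 (e 0) := by
    intro e he
    have := Finsupp.single_add_erase 0 e
    rw [he, add_zero] at this
    exact this.symm
  rw [Finset.sum_eq_single (Finsupp.single 0 d)]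
  · simp
  · intro e _ hne
    split_ifs with h0
    · have := key e h0
      rw [this]
      apply h
      rintro rfl
      exact hne this
    · rfl
  · intro h
    simpa using h

lemma mdeg_mem (m : MonomialOrder (Fin (n + 1))) {f : MvPolynomial (Fin (n + 1)) K} (hf : f ≠ 0) :
    coeff (m.mdeg f) f ≠ 0 := by
  have := (m.degree_mem_support_iff f).2 hf
  exact mem_support_iff.1 this

lemma le_mdeg (m : MonomialOrder (Fin (n + 1))) {f : MvPolynomial (Fin (n + 1)) K}
    {e : Fin (n + 1) →₀ ℕ} (he : coeff e f ≠ 0) : m.toSyn e ≤ m.toSyn (m.mdeg f) :=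
  m.le_degree (mem_support_iff.2 he)

lemma prod_X_eq (s : Finset (Fin (n + 1))) :
    (∏ i ∈ s, X i : MvPolynomial (Fin (n + 1)) K) =
      monomial (∑ i ∈ s, Finsupp.single i 1) 1 := by
  rw [MvPolynomial.monomial_sum_one]
  rfl

lemma support_not_face (m : MonomialOrder (Fin (n + 1)))
    (Δ : SComplex n) (I : Ideal (MvPolynomial (Fin (n + 1)) K))
    (hin : initialIdeal m I = Δ.srIdeal K)
    {f : MvPolynomial (Fin (n + 1)) K} (hf : f ∈ I) (hf0 : f ≠ 0) :
    (m.mdeg f).support ∉ Δ.faces := by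
  classical
  intro hface
  have h1 : (monomial (m.mdeg f) (1 : K)) ∈ Δ.srIdeal K := by
    rw [← hin]
    exact Ideal.subset_span ⟨f, hf, hf0, rfl⟩
  have h2 : Δ.srIdeal K = Ideal.span ((fun s => monomial s (1 : K)) ''
      {e | ∃ s : Finset (Fin (n + 1)), s ∉ Δ.faces ∧ e = ∑ i ∈ s, Finsupp.single i 1}) := by
    rw [SComplex.srIdeal]
    congr 1
    ext g
    constructor
    · rintro ⟨s, hs, rfl⟩
      exact ⟨_, ⟨s, hs, rfl⟩, (prod_X_eq s).symm⟩
    · rintro ⟨_, ⟨s, hs, rfl⟩, rfl⟩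
      exact ⟨s, hs, (prod_X_eq s).symm⟩
  rw [h2, mem_ideal_span_monomial_image] at h1
  obtain ⟨_, ⟨s, hs, rfl⟩, hle⟩ := h1 (m.mdeg f) (by simp [coeff_monomial])
  apply hs
  apply Δ.down_closed hface
  intro i hi
  have := hle i
  rw [Finsupp.mem_support_iff]
  have h3 : (∑ i ∈ s, Finsupp.single i 1 : Fin (n + 1) →₀ ℕ) i = 1 := by
    rw [Finsupp.finsetSum_apply, Finset.sum_eq_single i]
    · simp
    · intro j _ hj; simp [hj]
    · intro h; exact absurd hi h
  omega

lemma exists_lead (m : MonomialOrder (Fin (n + 1)))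
    (Δ : SComplex n) (I : Ideal (MvPolynomial (Fin (n + 1)) K))
    (hin : initialIdeal m I = Δ.srIdeal K) {s : Finset (Fin (n + 1))} (hs : s ∉ Δ.faces) :
    ∃ f ∈ I, f ≠ 0 ∧ m.mdeg f ≤ ∑ i ∈ s, Finsupp.single i 1 := by
  have h1 : (∏ i ∈ s, X i : MvPolynomial (Fin (n + 1)) K) ∈ initialIdeal m I := by
    rw [hin]
    exact Ideal.subset_span ⟨s, hs, rfl⟩
  have h2 : initialIdeal m I = Ideal.span ((fun s => monomial s (1 : K)) ''
      {e | ∃ f ∈ I, f ≠ 0 ∧ e = m.mdeg f}) := by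
    rw [initialIdeal]
    congr 1
    ext g
    constructor
    · rintro ⟨f, hf, hf0, rfl⟩
      exact ⟨_, ⟨f, hf, hf0, rfl⟩, rfl⟩
    · rintro ⟨_, ⟨f, hf, hf0, rfl⟩, rfl⟩
      exact ⟨f, hf, hf0, rfl⟩
  rw [h2, prod_X_eq, mem_ideal_span_monomial_image] at h1
  obtain ⟨_, ⟨f, hf, hf0, rfl⟩, hle⟩ := h1 _ (by classical simp [coeff_monomial]; rfl)
  exact ⟨f, hf, hf0, hle⟩

lemma exists_homog {I : Ideal (MvPolynomial (Fin (n + 1)) K)} (hI : IsHomog I)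
    {f : MvPolynomial (Fin (n + 1)) K} (hf : f ∈ I ⊔ Ideal.span {X 0 - 1}) :
    ∃ N, ∃ F ∈ I, F.IsHomogeneous N ∧ deh K n F = deh K n f := by
  obtain ⟨g, hg, h, hh, rfl⟩ := Submodule.mem_sup.1 hf
  obtain ⟨q, rfl⟩ := Ideal.mem_span_singleton'.1 hh
  refine ⟨g.totalDegree, ∑ d ∈ Finset.range (g.totalDegree + 1),
    X 0 ^ (g.totalDegree - d) * homogeneousComponent d g, ?_, ?_, ?_⟩
  · exact Ideal.sum_mem _ fun d _ => Ideal.mul_mem_left _ _ (hI g hg d)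
  · apply IsHomogeneous.sum
    intro d hd
    have := (isHomogeneous_X_pow (R := K) (0 : Fin (n + 1)) (g.totalDegree - d)).mul
      (homogeneousComponent_isHomogeneous d g)
    rwa [Nat.sub_add_cancel (by simpa [Nat.lt_succ_iff] using hd)] at this
  · have hX : deh K n (X 0) = 1 := by simp [deh]
    rw [map_add, map_mul, map_sub, hX, map_one, sub_self, mul_zero, add_zero]
    conv_rhs => rw [← sum_homogeneousComponent g]
    simp [map_sum, map_mul, map_pow, hX]

/-- main contradiction lemma -/
lemma no_standard (m : MonomialOrder (Fin (n + 1))) (hm : m.Descending)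
    (Δ : SComplex n) (I : Ideal (MvPolynomial (Fin (n + 1)) K)) (hI : IsHomog I)
    (hin : initialIdeal m I = Δ.srIdeal K)
    {f : MvPolynomial (Fin (n + 1)) K} (hf : f ∈ I ⊔ Ideal.span {X 0 - 1})
    (hf0 : deh K n f ≠ 0) (U : Set (Fin (n + 1) →₀ ℕ))
    (hU1 : ∀ u ∈ U, coeff u (deh K n f) ≠ 0)
    (hU2 : ∀ u ∈ U, insert 0 u.support ∈ Δ.faces)
    (hU3 : ∀ v, coeff v (deh K n f) ≠ 0 → ∃ u ∈ U, u ≤ v) : False := by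
  obtain ⟨N, F, hFI, hF, hFf⟩ := exists_homog hI hf
  have hF0 : F ≠ 0 := by
    rintro rfl
    rw [map_zero] at hFf
    exact hf0 hFf.symm
  have he := mdeg_mem m hF0
  rw [← hFf] at hU1 hU3
  obtain ⟨u, hu, hle⟩ := hU3 _ (coeff_deh_erase hF he)
  obtain ⟨e1, he1, rfl⟩ := exists_of_mem_support_deh F u (hU1 u hu)
  have hdeg : ∀ e, coeff e F ≠ 0 → e.degree = N := fun e he => by
    by_contra hh
    exact he (hF.coeff_eq_zero hh)
  have h1 := toSyn_le_of_erase m hm ((hdeg _ he).trans (hdeg _ he1).symm) hle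
  have h2 := le_mdeg m he1
  have h3 : m.mdeg F = e1 := m.toSyn.injective (le_antisymm h1 h2)
  apply support_not_face m Δ I hin hFI hF0
  apply Δ.down_closed (hU2 _ hu)
  rw [h3]
  intro i hi
  by_cases h : i = 0
  · simp [h]
  · simp [h, Finsupp.mem_support_iff.1 hi]

lemma coeff_single_zero (m : MonomialOrder (Fin (n + 1))) (hm : m.Descending)
    (Δ : SComplex n) (hvert : ∀ i : Fin (n + 1), ({i} : Finset (Fin (n + 1))) ∈ Δ.faces)
    (I : Ideal (MvPolynomial (Fin (n + 1)) K)) (hI : IsHomog I)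
    (hin : initialIdeal m I = Δ.srIdeal K)
    {f : MvPolynomial (Fin (n + 1)) K} (hf : f ∈ I) (d : ℕ) :
    coeff (Finsupp.single 0 d) f = 0 := by
  by_contra hc
  have hc' : coeff (Finsupp.single 0 d) (homogeneousComponent d f) ≠ 0 := by
    rw [coeff_homogeneousComponent]; simpa using hc
  have h0 : homogeneousComponent d f ≠ 0 := by
    intro h; simp [h] at hc'
  have hd := mdeg_mem m h0
  have h1 := le_mdeg m hc'
  have h2 : (m.mdeg (homogeneousComponent d f)).degree = d := by
    by_contra hh
    exact hd ((homogeneousComponent_isHomogeneous d f).coeff_eq_zero hh)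
  have h3 := toSyn_le_single m hm (m.mdeg (homogeneousComponent d f))
  rw [h2] at h3
  have h4 := m.toSyn.injective (le_antisymm h3 h1)
  apply support_not_face m Δ I hin (hI f hf d) h0
  rw [h4]
  exact Δ.down_closed (hvert 0) Finsupp.support_single_subset

lemma eval_pt0_eq_zero (m : MonomialOrder (Fin (n + 1))) (hm : m.Descending)
    (Δ : SComplex n) (hvert : ∀ i : Fin (n + 1), ({i} : Finset (Fin (n + 1))) ∈ Δ.faces)
    (I : Ideal (MvPolynomial (Fin (n + 1)) K)) (hI : IsHomog I)
    (hin : initialIdeal m I = Δ.srIdeal K)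
    {f : MvPolynomial (Fin (n + 1)) K} (hf : f ∈ I) : eval (pt0 K n) f = 0 := by
  have := coeff_single_zero m hm Δ hvert I hI hin hf
  rw [eval_pt0 f 0 (fun k _ => this k), this]

lemma eval_pderiv_zero (m : MonomialOrder (Fin (n + 1))) (hm : m.Descending)
    (Δ : SComplex n) (hvert : ∀ i : Fin (n + 1), ({i} : Finset (Fin (n + 1))) ∈ Δ.faces)
    (I : Ideal (MvPolynomial (Fin (n + 1)) K)) (hI : IsHomog I)
    (hin : initialIdeal m I = Δ.srIdeal K)
    {f : MvPolynomial (Fin (n + 1)) K} (hf : f ∈ I) : eval (pt0 K n) (pderiv 0 f) = 0 := by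
  have h := coeff_single_zero m hm Δ hvert I hI hin hf
  have h2 : ∀ d, coeff (Finsupp.single 0 d) (pderiv 0 f) = 0 := by
    intro d
    rw [coeff_pderiv, ← Finsupp.single_add, h, zero_mul]
  rw [eval_pt0 _ 0 (fun k _ => h2 k), h2]

universe u in
lemma exists_loc {S : Type u} [CommRing S] [IsNoetherianRing S] (P J : Ideal S) [P.IsPrime]
    (hJ : J ≤ P) : ∃ (O : Type u) (_ : CommRing O) (_ : IsLocalRing O) (_ : IsNoetherianRing O)
      (ψ : S →+* O), (∀ f, ψ f = 0 ↔ ∃ U ∉ P, U * f ∈ J) ∧ (∀ y, ∃ U ∉ P, ∃ V, ψ U * y = ψ V) ∧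
      (∀ U, IsUnit (ψ U) ↔ U ∉ P) := by
  let A := Localization.AtPrime P
  let JA : Ideal A := J.map (algebraMap S A)
  let ψ : S →+* A ⧸ JA := (Ideal.Quotient.mk JA).comp (algebraMap S A)
  have hz : ∀ f, ψ f = 0 ↔ ∃ U ∉ P, U * f ∈ J := by
    intro f
    change Ideal.Quotient.mk JA (algebraMap S A f) = 0 ↔ _
    rw [Ideal.Quotient.eq_zero_iff_mem, IsLocalization.algebraMap_mem_map_algebraMap_iff P.primeCompl]
    rfl
  have hfr : ∀ y, ∃ U ∉ P, ∃ V, ψ U * y = ψ V := by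
    intro y
    obtain ⟨y, rfl⟩ := Ideal.Quotient.mk_surjective y
    obtain ⟨⟨V, U⟩, h⟩ := IsLocalization.surj P.primeCompl y
    refine ⟨U, U.2, V, ?_⟩
    change Ideal.Quotient.mk JA (algebraMap S A U) * _ = Ideal.Quotient.mk JA (algebraMap S A V)
    rw [← map_mul, mul_comm, h]
  have hnt : Nontrivial (A ⧸ JA) := by
    refine ⟨0, 1, fun h => ?_⟩
    rw [← map_one ψ, eq_comm, hz] at h
    obtain ⟨U, hU, h⟩ := h
    rw [mul_one] at h
    exact hU (hJ h)
  have hloc : IsLocalRing (A ⧸ JA) :=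
    IsLocalRing.of_surjective' (Ideal.Quotient.mk JA) Ideal.Quotient.mk_surjective
  refine ⟨A ⧸ JA, inferInstance, hloc, ?_, ψ, hz, hfr, ?_⟩
  · have : IsNoetherianRing A := IsLocalization.isNoetherianRing P.primeCompl A inferInstance
    infer_instance
  · intro U
    constructor
    · intro h hU
      obtain ⟨y, hy⟩ := h.exists_right_inv
      obtain ⟨U', hU', V, hV⟩ := hfr y
      have h2 : ψ (U * V - U') = 0 := by
        rw [map_sub, map_mul, ← hV, mul_left_comm, hy, mul_one, sub_self]
      obtain ⟨W, hW, h3⟩ := (hz _).1 h2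
      have h4 := (Ideal.IsPrime.mem_or_mem ‹P.IsPrime› (hJ h3)).resolve_left hW
      have h5 := P.sub_mem (P.mul_mem_right V hU) h4
      exact hU' (by simpa using h5)
    · intro h
      exact (IsLocalization.map_units A (⟨U, h⟩ : P.primeCompl)).map (Ideal.Quotient.mk JA)

lemma eq_unit_mul_pow {O : Type*} [CommRing O] [IsLocalRing O] [IsNoetherianRing O] (π : O)
    (hπ : IsLocalRing.maximalIdeal O ≤ Ideal.span {π}) (hπm : ¬ IsUnit π)
    {x : O} (hx : x ≠ 0) (hxm : ¬ IsUnit x) :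
    ∃ r, r ≠ 0 ∧ ∃ u, IsUnit u ∧ x = u * π ^ r := by
  classical
  have hm : IsLocalRing.maximalIdeal O = Ideal.span {π} :=
    le_antisymm hπ ((Ideal.span_singleton_le_iff_mem _).2 ((IsLocalRing.mem_maximalIdeal _).2 hπm))
  have hk : ∃ k, x ∉ Ideal.span {π ^ (k + 1)} := by
    by_contra! h
    apply hx
    have h1 := Ideal.iInf_pow_eq_bot_of_isLocalRing (Ideal.span {π})
      (by rw [← hm]; exact Ideal.IsPrime.ne_top')
    have : x ∈ (⨅ i : ℕ, Ideal.span {π} ^ i) := by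
      rw [Submodule.mem_iInf]
      intro i
      rcases i with _ | i
      · simp
      · rw [Ideal.span_singleton_pow]; exact h i
    rw [h1] at this
    simpa using this
  have h1 := Nat.find_spec hk
  have h2 : x ∈ Ideal.span {π ^ (Nat.find hk)} := by
    rcases h : Nat.find hk with _ | j
    · simp
    · by_contra h'
      have := Nat.find_min' hk h'
      omega
  obtain ⟨u, hu⟩ := Ideal.mem_span_singleton'.1 h2
  have huu : IsUnit u := by
    by_contra hnu
    have h3 := hπ ((IsLocalRing.mem_maximalIdeal u).2 hnu)
    obtain ⟨v, hv⟩ := Ideal.mem_span_singleton'.1 h3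
    apply h1
    exact Ideal.mem_span_singleton'.2 ⟨v, by rw [pow_succ', ← mul_assoc, hv, hu]⟩
  refine ⟨Nat.find hk, ?_, u, huu, hu.symm⟩
  intro h0
  rw [h0, pow_zero, mul_one] at hu
  exact hxm (hu ▸ huu)

/-- linear forms centered at the point -/
noncomputable def linForm (K : Type*) [Field K] (n : ℕ) :
    (Fin (n + 1) → K) →ₗ[K] MvPolynomial (Fin (n + 1)) K :=
  Fintype.linearCombination K (fun i => X i - C (pt0 K n i))

lemma linForm_apply (w : Fin (n + 1) → K) :
    linForm K n w = ∑ i, C (w i) * (X i - C (pt0 K n i)) := by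
  simp [linForm, Fintype.linearCombination_apply, smul_eq_C_mul]

lemma linForm_mem (w : Fin (n + 1) → K) : linForm K n w ∈ RingHom.ker (eval (pt0 K n)) := by
  simp [linForm_apply, RingHom.mem_ker]

lemma taylor (f : MvPolynomial (Fin (n + 1)) K) :
    f - C (eval (pt0 K n) f) - linForm K n (fun i => eval (pt0 K n) (pderiv i f)) ∈
      RingHom.ker (eval (pt0 K n)) ^ 2 := by
  classical
  induction f using MvPolynomial.induction_on with
  | C a => 
    have : (fun i : Fin (n + 1) => eval (pt0 K n) (pderiv i (C a))) = 0 := by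
      funext i; simp
    rw [this]; simp
  | add p q hp hq =>
    have : (fun i : Fin (n + 1) => eval (pt0 K n) (pderiv i (p + q))) =
      (fun i => eval (pt0 K n) (pderiv i p)) + (fun i => eval (pt0 K n) (pderiv i q)) := by
      funext i; simp
    rw [this, map_add (linForm K n), map_add (eval _), C_add]
    convert Ideal.add_mem _ hp hq using 1
    ring
  | mul_X p j hp =>
    have : (fun i : Fin (n + 1) => eval (pt0 K n) (pderiv i (p * X j))) =
      (pt0 K n j) • (fun i => eval (pt0 K n) (pderiv i p)) + (eval (pt0 K n) p) • Pi.single j 1 := by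
      funext i
      rw [pderiv_mul, map_add, map_mul, map_mul, eval_X, pderiv_X]
      by_cases h : i = j
      · subst h; simp [mul_comm]
      · simp [h, mul_comm, Ne.symm h]
    have h1 : linForm K n (Pi.single j 1) = X j - C (pt0 K n j) := by
      simp [linForm]
    rw [this, map_add (linForm K n), map_smul, map_smul, h1, map_mul, eval_X, C_mul,
      smul_eq_C_mul, smul_eq_C_mul]
    set L := linForm K n (fun i => eval (pt0 K n) (pderiv i p)) with hL
    have h2 : L * (X j - C (pt0 K n j)) ∈ RingHom.ker (eval (pt0 K n)) ^ 2 := by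
      rw [pow_two]
      exact Ideal.mul_mem_mul (linForm_mem _) (by simp [RingHom.mem_ker])
    convert Ideal.add_mem _ (Ideal.mul_mem_left _ (X j) hp) h2 using 1
    ring

/-- The span of the Jacobian rows. -/
noncomputable def jacSpan (I : Ideal (MvPolynomial (Fin (n + 1)) K)) :
    Submodule K (Fin (n + 1) → K) :=
  Submodule.span K {v | ∃ f ∈ I, v = fun i => eval (pt0 K n) (pderiv i f)}

/-- The subspace of linear forms which vanish to second order. -/
noncomputable def tanSpace (I : Ideal (MvPolynomial (Fin (n + 1)) K)) :
    Submodule K (Fin (n + 1) → K) :=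
  Submodule.comap (linForm K n) (((I ⊔ Ideal.span {X 0 - 1}) ⊔
    RingHom.ker (eval (pt0 K n)) ^ 2).restrictScalars K)

lemma finrank_tanSpace (I : Ideal (MvPolynomial (Fin (n + 1)) K))
    (h0 : ∀ f ∈ I, eval (pt0 K n) f = 0) (h1 : ∀ f ∈ I, eval (pt0 K n) (pderiv 0 f) = 0) :
    Module.finrank K (jacSpan I) + 1 ≤ Module.finrank K (tanSpace I) := by
  classical
  have hW : jacSpan I ≤ tanSpace I := by
    rw [jacSpan, Submodule.span_le]
    rintro _ ⟨f, hf, rfl⟩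
    have := taylor f
    rw [h0 f hf, C_0, sub_zero] at this
    change _ ∈ (I ⊔ Ideal.span {X 0 - 1}) ⊔ RingHom.ker (eval (pt0 K n)) ^ 2
    have h2 := Ideal.sub_mem ((I ⊔ Ideal.span {X 0 - 1}) ⊔ RingHom.ker (eval (pt0 K n)) ^ 2)
      (Ideal.mem_sup_left (Ideal.mem_sup_left hf)) (Ideal.mem_sup_right this)
    simpa using h2
  have he : (Pi.single 0 1 : Fin (n + 1) → K) ∈ tanSpace I := by
    change _ ∈ (I ⊔ Ideal.span {X 0 - 1}) ⊔ RingHom.ker (eval (pt0 K n)) ^ 2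
    apply Ideal.mem_sup_left
    apply Ideal.mem_sup_right
    apply Ideal.subset_span
    simp [linForm, pt0]
  have hne : (Pi.single 0 1 : Fin (n + 1) → K) ∉ jacSpan I := by
    intro h
    have : jacSpan I ≤ LinearMap.ker (LinearMap.proj (R := K) (φ := fun _ : Fin (n + 1) => K) 0) := by
      rw [jacSpan, Submodule.span_le]
      rintro _ ⟨f, hf, rfl⟩
      simpa using h1 f hf
    have := this h
    simp at this
  have hlt : jacSpan I < tanSpace I := lt_of_le_of_ne hW (fun h => hne (h ▸ he))
  exact Submodule.finrank_lt_finrank_of_lt hlt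

lemma exists_codim_one (V : Submodule K (Fin (n + 1) → K)) (h : n ≤ Module.finrank K V) :
    ∃ v, V ⊔ Submodule.span K {v} = ⊤ := by
  by_cases hV : V = ⊤
  · exact ⟨0, by simp [hV]⟩
  obtain ⟨v, -, hv⟩ := SetLike.exists_of_lt (lt_top_iff_ne_top.2 hV)
  refine ⟨v, ?_⟩
  apply Submodule.eq_top_of_finrank_eq
  have hlt : V < V ⊔ Submodule.span K {v} := by
    refine lt_of_le_of_ne le_sup_left fun h => hv ?_
    rw [h]
    exact Submodule.mem_sup_right (Submodule.mem_span_singleton_self v)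
  have h1 := Submodule.finrank_lt_finrank_of_lt hlt
  have h2 := Submodule.finrank_le (V ⊔ Submodule.span K {v})
  rw [Module.finrank_fin_fun] at *
  omega

lemma ker_le_of_codim (I : Ideal (MvPolynomial (Fin (n + 1)) K)) (v : Fin (n + 1) → K)
    (hv : tanSpace I ⊔ Submodule.span K {v} = ⊤) :
    RingHom.ker (eval (pt0 K n)) ≤ Ideal.span {linForm K n v} ⊔
      ((I ⊔ Ideal.span {X 0 - 1}) ⊔ RingHom.ker (eval (pt0 K n)) ^ 2) := by
  intro f hf
  have h1 := taylor f
  rw [RingHom.mem_ker.1 hf, C_0, sub_zero] at h1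
  set w : Fin (n + 1) → K := fun i => eval (pt0 K n) (pderiv i f)
  have hw : w ∈ tanSpace I ⊔ Submodule.span K {v} := by rw [hv]; trivial
  obtain ⟨a, ha, b, hb, hab⟩ := Submodule.mem_sup.1 hw
  obtain ⟨c, rfl⟩ := Submodule.mem_span_singleton.1 hb
  have h2 : f = (f - linForm K n w) + (linForm K n a + C c * linForm K n v) := by
    rw [← hab, map_add, map_smul, smul_eq_C_mul]; ring
  rw [h2]
  refine Ideal.add_mem _ (Ideal.mem_sup_right (Ideal.mem_sup_right h1)) (Ideal.add_mem _ ?_ ?_)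
  · exact Ideal.mem_sup_right ha
  · exact Ideal.mem_sup_left (Ideal.mul_mem_left _ _ (Ideal.mem_span_singleton_self _))

lemma maxIdeal_le {S O : Type*} [CommRing S] [CommRing O] [IsLocalRing O] [IsNoetherianRing O]
    (P J : Ideal S) (ψ : S →+* O) (hJ : ∀ f ∈ J, ψ f = 0)
    (hfr : ∀ y, ∃ U ∉ P, ∃ V, ψ U * y = ψ V) (hu : ∀ U, IsUnit (ψ U) ↔ U ∉ P) (l : S)
    (h : P ≤ Ideal.span {l} ⊔ (J ⊔ P ^ 2)) :
    IsLocalRing.maximalIdeal O ≤ Ideal.span {ψ l} := by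
  have h1 : IsLocalRing.maximalIdeal O = P.map ψ := by
    apply le_antisymm
    · intro y hy
      obtain ⟨U, hU, V, hV⟩ := hfr y
      have hVP : V ∈ P := by
        by_contra hV'
        rw [← hu, ← hV] at hV'
        exact (IsLocalRing.mem_maximalIdeal _).1 hy (isUnit_of_mul_isUnit_right hV')
      obtain ⟨z, hz⟩ := ((hu U).2 hU).exists_left_inv
      have : y = z * ψ V := by rw [← hV, ← mul_assoc, hz, one_mul]
      rw [this]
      exact Ideal.mul_mem_left _ _ (Ideal.mem_map_of_mem ψ hVP)
    · rw [Ideal.map_le_iff_le_comap]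
      intro f hf
      rw [Ideal.mem_comap, IsLocalRing.mem_maximalIdeal, mem_nonunits_iff, hu]
      exact fun h => h hf
  have h2 : J.map ψ = ⊥ := by
    rw [eq_bot_iff, Ideal.map_le_iff_le_comap]
    intro f hf
    simpa using hJ f hf
  apply Submodule.le_of_le_smul_of_le_jacobson_bot (IsNoetherian.noetherian _)
    (IsLocalRing.maximalIdeal_le_jacobson _)
  have h3 := Ideal.map_mono (f := ψ) h
  rw [Ideal.map_sup, Ideal.map_sup, h2, bot_sup_eq, Ideal.map_pow, Ideal.map_span,
    Set.image_singleton, ← h1, pow_two] at h3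
  exact h3

lemma deh_mul_X_pow (V : MvPolynomial (Fin (n + 1)) K) {a : Fin (n + 1)} (ha : a ≠ 0) (s : ℕ) :
    deh K n (V * X a ^ s) = deh K n V * monomial (Finsupp.single a s) 1 := by
  rw [map_mul, map_pow, ← X_pow_eq_monomial]
  simp [deh, ha]

lemma insert_single {Δ : SComplex n} {a : Fin (n + 1)}
    (h : ({0, a} : Finset (Fin (n + 1))) ∈ Δ.faces) (s : ℕ) :
    insert 0 (Finsupp.single a s).support ∈ Δ.faces :=
  Δ.down_closed h (Finset.insert_subset_insert _ Finsupp.support_single_subset)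

lemma one_term (m : MonomialOrder (Fin (n + 1))) (hm : m.Descending)
    (Δ : SComplex n) (I : Ideal (MvPolynomial (Fin (n + 1)) K)) (hI : IsHomog I)
    (hin : initialIdeal m I = Δ.srIdeal K) {a : Fin (n + 1)} (ha : a ≠ 0)
    (hface : ({0, a} : Finset (Fin (n + 1))) ∈ Δ.faces)
    {V : MvPolynomial (Fin (n + 1)) K} (hV : eval (pt0 K n) V ≠ 0) :
    V * X a ∉ I ⊔ Ideal.span {X 0 - 1} := by
  classical
  intro hf
  have hd := deh_mul_X_pow V ha 1
  rw [pow_one] at hd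
  have hc : coeff (Finsupp.single a 1) (deh K n (V * X a)) ≠ 0 := by
    rw [hd, coeff_mul_monomial']
    simpa [constantCoeff_deh] using hV
  refine no_standard m hm Δ I hI hin hf (fun h => by simp [h] at hc) {Finsupp.single a 1}
    ?_ ?_ ?_
  · rintro u rfl; exact hc
  · rintro u rfl; exact insert_single hface 1
  · intro v hv
    rw [hd, coeff_mul_monomial'] at hv
    refine ⟨_, rfl, ?_⟩
    by_contra h
    simp only [h, if_false] at hv
    exact hv rfl

lemma two_terms (m : MonomialOrder (Fin (n + 1))) (hm : m.Descending)
    (Δ : SComplex n) (I : Ideal (MvPolynomial (Fin (n + 1)) K)) (hI : IsHomog I)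
    (hin : initialIdeal m I = Δ.srIdeal K) {a b : Fin (n + 1)} (ha : a ≠ 0) (hb : b ≠ 0)
    (hab : a ≠ b) (hfa : ({0, a} : Finset (Fin (n + 1))) ∈ Δ.faces)
    (hfb : ({0, b} : Finset (Fin (n + 1))) ∈ Δ.faces) {s r : ℕ} (hs : s ≠ 0) (hr : r ≠ 0)
    {V T : MvPolynomial (Fin (n + 1)) K} (hV : eval (pt0 K n) V ≠ 0)
    (hT : eval (pt0 K n) T ≠ 0) :
    V * X a ^ s - T * X b ^ r ∉ I ⊔ Ideal.span {X 0 - 1} := by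
  classical
  intro hf
  have hd : deh K n (V * X a ^ s - T * X b ^ r) =
      deh K n V * monomial (Finsupp.single a s) 1 - deh K n T * monomial (Finsupp.single b r) 1 := by
    rw [map_sub, deh_mul_X_pow V ha, deh_mul_X_pow T hb]
  have hn1 : ¬ (Finsupp.single b r : Fin (n + 1) →₀ ℕ) ≤ Finsupp.single a s := by
    intro h
    have := h b
    simp [hab] at this
    exact hr this
  have hn2 : ¬ (Finsupp.single a s : Fin (n + 1) →₀ ℕ) ≤ Finsupp.single b r := by
    intro h
    have := h a
    simp [hab.symm] at this
    exact hs this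
  have hca : coeff (Finsupp.single a s) (deh K n (V * X a ^ s - T * X b ^ r)) ≠ 0 := by
    rw [hd, coeff_sub, coeff_mul_monomial', coeff_mul_monomial', if_neg hn1]
    simpa [constantCoeff_deh] using hV
  have hcb : coeff (Finsupp.single b r) (deh K n (V * X a ^ s - T * X b ^ r)) ≠ 0 := by
    rw [hd, coeff_sub, coeff_mul_monomial', coeff_mul_monomial', if_neg hn2]
    simpa [constantCoeff_deh] using hT
  refine no_standard m hm Δ I hI hin hf (fun h => by simp [h] at hca)
    {Finsupp.single a s, Finsupp.single b r} ?_ ?_ ?_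
  · rintro u (rfl | rfl)
    · exact hca
    · exact hcb
  · rintro u (rfl | rfl)
    · exact insert_single hfa s
    · exact insert_single hfb r
  · intro v hv
    rw [hd, coeff_sub, coeff_mul_monomial', coeff_mul_monomial'] at hv
    by_contra! h
    have h1 := h _ (Or.inl rfl)
    have h2 := h _ (Or.inr rfl)
    simp [h1, h2] at hv

lemma sup_le_ker (I : Ideal (MvPolynomial (Fin (n + 1)) K))
    (h0 : ∀ f ∈ I, eval (pt0 K n) f = 0) :
    I ⊔ Ideal.span {X 0 - 1} ≤ RingHom.ker (eval (pt0 K n)) := by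
  refine sup_le (fun f hf => h0 f hf) ?_
  rw [Ideal.span_singleton_le_iff_mem, RingHom.mem_ker]
  simp [pt0]

lemma X_mem_ker {a : Fin (n + 1)} (ha : a ≠ 0) :
    (X a : MvPolynomial (Fin (n + 1)) K) ∈ RingHom.ker (eval (pt0 K n)) := by
  rw [RingHom.mem_ker]
  simp [pt0, ha]

lemma rank_lt (m : MonomialOrder (Fin (n + 1))) (hm : m.Descending)
    (Δ : SComplex n) (hvert : ∀ i : Fin (n + 1), ({i} : Finset (Fin (n + 1))) ∈ Δ.faces)
    (I : Ideal (MvPolynomial (Fin (n + 1)) K)) (hI : IsHomog I)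
    (hin : initialIdeal m I = Δ.srIdeal K) {a : Fin (n + 1)} (ha : a ≠ 0)
    (hface : ({0, a} : Finset (Fin (n + 1))) ∈ Δ.faces) :
    Module.finrank K (jacSpan I) < n := by
  by_contra! hge
  have h0 : ∀ f ∈ I, eval (pt0 K n) f = 0 := fun f hf =>
    eval_pt0_eq_zero m hm Δ hvert I hI hin hf
  have h1 := finrank_tanSpace I h0 (fun f hf => eval_pderiv_zero m hm Δ hvert I hI hin hf)
  have h2 : tanSpace I = ⊤ := by
    apply Submodule.eq_top_of_finrank_eq
    have := Submodule.finrank_le (tanSpace I)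
    rw [Module.finrank_fin_fun] at *
    omega
  have h3 := ker_le_of_codim I 0 (by rw [h2]; simp)
  have hp : (RingHom.ker (eval (pt0 K n))).IsPrime := RingHom.ker_isPrime _
  obtain ⟨O, _, _, _, ψ, hz, hfr, hu⟩ := exists_loc _ _ (sup_le_ker I h0)
  have h4 := maxIdeal_le _ _ ψ (fun f hf => (hz f).2 ⟨1, by simp [RingHom.mem_ker], by simpa using hf⟩)
    hfr hu _ h3
  have h5 : ψ (X a) ∈ IsLocalRing.maximalIdeal O := by
    rw [IsLocalRing.mem_maximalIdeal, mem_nonunits_iff, hu]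
    exact fun h => h (X_mem_ker ha)
  have h6 : ψ (X a) = 0 := by simpa using h4 h5
  obtain ⟨U, hU, h7⟩ := (hz _).1 h6
  exact one_term m hm Δ I hI hin ha hface hU h7

lemma edge_unique (m : MonomialOrder (Fin (n + 1))) (hm : m.Descending)
    (Δ : SComplex n) (hvert : ∀ i : Fin (n + 1), ({i} : Finset (Fin (n + 1))) ∈ Δ.faces)
    (I : Ideal (MvPolynomial (Fin (n + 1)) K)) (hI : IsHomog I)
    (hin : initialIdeal m I = Δ.srIdeal K) {a b : Fin (n + 1)} (ha : a ≠ 0) (hb : b ≠ 0)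
    (hfa : ({0, a} : Finset (Fin (n + 1))) ∈ Δ.faces)
    (hfb : ({0, b} : Finset (Fin (n + 1))) ∈ Δ.faces)
    (hrank : n ≤ Module.finrank K (jacSpan I) + 1) : a = b := by
  by_contra hab
  have h0 : ∀ f ∈ I, eval (pt0 K n) f = 0 := fun f hf =>
    eval_pt0_eq_zero m hm Δ hvert I hI hin hf
  have h1 := finrank_tanSpace I h0 (fun f hf => eval_pderiv_zero m hm Δ hvert I hI hin hf)
  obtain ⟨v, hv⟩ := exists_codim_one (tanSpace I) (hrank.trans h1)
  have h3 := ker_le_of_codim I v hv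
  have hp : (RingHom.ker (eval (pt0 K n))).IsPrime := RingHom.ker_isPrime _
  obtain ⟨O, _, _, _, ψ, hz, hfr, hu⟩ := exists_loc _ _ (sup_le_ker I h0)
  have h4 := maxIdeal_le _ _ ψ (fun f hf => (hz f).2 ⟨1, by simp [RingHom.mem_ker], by simpa using hf⟩)
    hfr hu _ h3
  have hπ : ¬ IsUnit (ψ (linForm K n v)) := by
    rw [hu]; exact fun h => h (linForm_mem v)
  have key : ∀ c : Fin (n + 1), c ≠ 0 → ({0, c} : Finset (Fin (n + 1))) ∈ Δ.faces →
      ∃ r, r ≠ 0 ∧ ∃ u, IsUnit u ∧ ψ (X c) = u * ψ (linForm K n v) ^ r := by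
    intro c hc hfc
    apply eq_unit_mul_pow _ h4 hπ
    · intro h6
      obtain ⟨U, hU, h7⟩ := (hz _).1 h6
      exact one_term m hm Δ I hI hin hc hfc hU h7
    · rw [hu]; exact fun h => h (X_mem_ker hc)
  obtain ⟨r, hr, u, huu, hxa⟩ := key a ha hfa
  obtain ⟨s, hs, w, hwu, hxb⟩ := key b hb hfb
  obtain ⟨U1, hU1, V1, hV1⟩ := hfr (w ^ r)
  obtain ⟨U2, hU2, V2, hV2⟩ := hfr (u ^ s)
  have hV1' : V1 ∉ RingHom.ker (eval (pt0 K n)) := by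
    rw [← hu, ← hV1]
    exact ((hu _).2 hU1).mul (hwu.pow r)
  have hV2' : V2 ∉ RingHom.ker (eval (pt0 K n)) := by
    rw [← hu, ← hV2]
    exact ((hu _).2 hU2).mul (huu.pow s)
  have h5 : ψ (U2 * V1 * X a ^ s - U1 * V2 * X b ^ r) = 0 := by
    simp only [map_sub, map_mul, map_pow]
    rw [← hV1, ← hV2, hxa, hxb, mul_pow, mul_pow, ← pow_mul, ← pow_mul, mul_comm r s]
    ring
  obtain ⟨U3, hU3, h6⟩ := (hz _).1 h5
  rw [RingHom.mem_ker] at hU1 hU2 hU3 hV1' hV2'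
  refine two_terms m hm Δ I hI hin ha hb hab hfa hfb hs hr (V := U3 * (U2 * V1))
    (T := U3 * (U1 * V2)) ?_ ?_ ?_
  · simp only [map_mul]; exact mul_ne_zero hU3 (mul_ne_zero hU2 hV1')
  · simp only [map_mul]; exact mul_ne_zero hU3 (mul_ne_zero hU1 hV2')
  · convert h6 using 1; ring

lemma exists_row (m : MonomialOrder (Fin (n + 1))) (hm : m.Descending)
    (Δ : SComplex n) (hvert : ∀ i : Fin (n + 1), ({i} : Finset (Fin (n + 1))) ∈ Δ.faces)
    (I : Ideal (MvPolynomial (Fin (n + 1)) K)) (hI : IsHomog I)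
    (hin : initialIdeal m I = Δ.srIdeal K) {i : Fin (n + 1)} (hi : i ≠ 0)
    (hface : ({0, i} : Finset (Fin (n + 1))) ∉ Δ.faces) :
    ∃ w ∈ jacSpan I, w i ≠ 0 ∧ ∀ k, k ≠ 0 → k < i → w k = 0 := by
  classical
  obtain ⟨f, hf, hf0, hle⟩ := exists_lead m Δ I hin hface
  rw [Finset.sum_pair (Ne.symm hi)] at hle
  have hsupp := support_not_face m Δ I hin hf hf0
  set e := m.mdeg f with he
  have hval : ∀ j, e j ≤ (if j = 0 then 1 else 0) + (if j = i then 1 else 0) := by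
    intro j
    have := hle j
    simpa [Finsupp.single_apply, eq_comm] using this
  have hsub : ∀ j ∈ e.support, j = 0 ∨ j = i := by
    intro j hj
    by_contra! h
    have := hval j
    simp [h.1, h.2] at this
    exact (Finsupp.mem_support_iff.1 hj) this
  have e0 : e 0 ≠ 0 := by
    intro h
    apply hsupp
    refine Δ.down_closed (hvert i) fun j hj => ?_
    rcases hsub j hj with rfl | rfl
    · exact absurd h (Finsupp.mem_support_iff.1 hj)
    · simp
  have ei : e i ≠ 0 := by
    intro h
    apply hsupp
    refine Δ.down_closed (hvert 0) fun j hj => ?_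
    rcases hsub j hj with rfl | rfl
    · simp
    · exact absurd h (Finsupp.mem_support_iff.1 hj)
  have hee : e = Finsupp.single 0 1 + Finsupp.single i 1 := by
    apply le_antisymm hle
    intro j
    have h0 := Nat.one_le_iff_ne_zero.2 e0
    have h1 := Nat.one_le_iff_ne_zero.2 ei
    by_cases hj0 : j = 0
    · subst hj0; simpa [hi] using h0
    · by_cases hji : j = i
      · subst hji; simpa [hj0] using h1
      · simp [hj0, hji]
  set g := homogeneousComponent 2 f with hg
  have hco : ∀ k : Fin (n + 1), k ≠ 0 →
      eval (pt0 K n) (pderiv k g) = coeff (Finsupp.single 0 1 + Finsupp.single k 1) f := by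
    intro k hk
    rw [eval_pt0 (pderiv k g) 1]
    · rw [coeff_pderiv, hg, coeff_homogeneousComponent]
      simp [hk]
    · intro d hd
      rw [coeff_pderiv, hg, coeff_homogeneousComponent, if_neg, zero_mul]
      simp only [map_add, Finsupp.degree_single]
      omega
  refine ⟨_, Submodule.subset_span ⟨g, hI f hf 2, rfl⟩, ?_, ?_⟩
  · rw [hco i hi, ← hee]
    exact mdeg_mem m hf0
  · intro k hk hki
    rw [hco k hk]
    by_contra h
    have h1 := le_mdeg m h
    rw [← he, hee, map_add, map_add] at h1
    have h2 := hm k i hki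
    exact absurd (le_of_add_le_add_left h1) (not_le.2 h2)

lemma rank_ge (m : MonomialOrder (Fin (n + 1))) (hm : m.Descending)
    (Δ : SComplex n) (hvert : ∀ i : Fin (n + 1), ({i} : Finset (Fin (n + 1))) ∈ Δ.faces)
    (I : Ideal (MvPolynomial (Fin (n + 1)) K)) (hI : IsHomog I)
    (hin : initialIdeal m I = Δ.srIdeal K) (T : Finset (Fin (n + 1)))
    (hT : ∀ i ∈ T, i ≠ 0 ∧ ({0, i} : Finset (Fin (n + 1))) ∉ Δ.faces) :
    T.card ≤ Module.finrank K (jacSpan I) := by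
  have : ∀ i : T, ∃ w ∈ jacSpan I, w i ≠ 0 ∧ ∀ k : Fin (n + 1), k ≠ 0 → k < i → w k = 0 := fun i =>
    exists_row m hm Δ hvert I hI hin (hT i i.2).1 (hT i i.2).2
  choose w hw hwi hwk using this
  have hli : LinearIndependent K (fun i : T => (⟨w i, hw i⟩ : jacSpan I)) := by
    rw [Fintype.linearIndependent_iff]
    intro g hg
    have hg' : ∑ i, g i • w i = 0 := by
      have := congrArg (Submodule.subtype _) hg
      simpa using this
    intro i
    induction i using WellFoundedLT.induction with
    | ind i ih =>
      have h1 := congrFun hg' i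
      rw [Finset.sum_apply, Finset.sum_eq_single i] at h1
      · simpa [hwi i] using h1
      · intro j _ hj
        rcases lt_or_gt_of_ne hj with h | h
        · simp [ih j h]
        · simp [hwk j i (hT i i.2).1 h]
      · simp
  simpa using hli.fintype_card_le_finrank

end helpers

/-- **Statement 6.** With `K` algebraically closed, `X_0 > ⋯ > X_n`, `in_<(I) = I_Δ` for a
graph `Δ` on `{0, …, n}` having every `i` as vertex, and `X = V(I) ⊆ ℙⁿ` a connected
projective curve, the coordinate point `P_0 = [1 : 0 : ⋯ : 0]` is a nonsingular point of `X`
(Jacobian criterion: it lies on `X` and the Jacobian rank there is `n - 1`) if and only if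
`0` is a free vertex of `Δ`. -/
theorem P0_nonsingular_iff_free_vertex {K : Type*} [Field K] [IsAlgClosed K] {n : ℕ}
    (m : MonomialOrder (Fin (n + 1))) (hm : m.Descending)
    (Δ : SComplex n) (hgraph : Δ.IsGraph)
    (hvert : ∀ i : Fin (n + 1), ({i} : Finset (Fin (n + 1))) ∈ Δ.faces)
    (I : Ideal (MvPolynomial (Fin (n + 1)) K)) (hI : IsHomog I)
    (hin : initialIdeal m I = Δ.srIdeal K)
    (hcurve : ringKrullDim (MvPolynomial (Fin (n + 1)) K ⧸ I) = 2)
    (hconn : IsConnectedProjVariety I) :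
    ((fun i => if i = 0 then 1 else 0) ∈ projZeros I ∧
        jacobianRank I (fun i => if i = 0 then 1 else 0) = n - 1) ↔
      Δ.FreeVertex 0 := by
  classical
  have hP : (fun i => if i = 0 then 1 else 0 : Fin (n + 1) → K) = pt0 K n := rfl
  have hJ : jacobianRank I (pt0 K n) = Module.finrank K (jacSpan I) := rfl
  rw [hP, hJ]
  have hmem : pt0 K n ∈ projZeros I := by
    refine ⟨fun h => ?_, fun f hf => eval_pt0_eq_zero m hm Δ hvert I hI hin hf⟩
    have := congrFun h 0
    simp [pt0] at this
  have hn : 1 ≤ n := by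
    obtain ⟨s, -, hs⟩ := hgraph.2
    have := Finset.card_le_univ s
    simp at this
    omega
  have hpair : ∀ e : Finset (Fin (n + 1)), e.card = 2 → 0 ∈ e → ∃ a, a ≠ 0 ∧ e = {0, a} := by
    intro e he h0
    obtain ⟨x, y, hxy, rfl⟩ := Finset.card_eq_two.1 he
    rcases Finset.mem_insert.1 h0 with h | h
    · exact ⟨y, by rw [h]; exact hxy.symm, by rw [h]⟩
    · rw [Finset.mem_singleton] at h
      exact ⟨x, by rw [h]; exact hxy, by rw [h, Finset.pair_comm]⟩
  constructor
  · rintro ⟨-, hr⟩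
    have hex : ∃ a, a ≠ 0 ∧ ({0, a} : Finset (Fin (n + 1))) ∈ Δ.faces := by
      by_contra! h
      have := rank_ge m hm Δ hvert I hI hin (Finset.univ.erase 0)
        (fun i hi => ⟨Finset.ne_of_mem_erase hi, h i (Finset.ne_of_mem_erase hi)⟩)
      simp at this
      omega
    obtain ⟨a, ha, hfa⟩ := hex
    refine ⟨{0, a}, ⟨hfa, Finset.card_pair ha.symm, by simp⟩, ?_⟩
    rintro e ⟨he, hc, h0⟩
    obtain ⟨b, hb, rfl⟩ := hpair e hc h0
    rw [edge_unique m hm Δ hvert I hI hin hb ha he hfa (by omega)]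
  · rintro ⟨e, ⟨he, hc, h0⟩, huniq⟩
    refine ⟨hmem, ?_⟩
    obtain ⟨a, ha, rfl⟩ := hpair e hc h0
    have h1 := rank_lt m hm Δ hvert I hI hin ha he
    have h2 := rank_ge m hm Δ hvert I hI hin ((Finset.univ.erase 0).erase a) (by
      intro i hi
      have hia := Finset.ne_of_mem_erase hi
      have hi0 := Finset.ne_of_mem_erase (Finset.mem_of_mem_erase hi)
      refine ⟨hi0, fun hf => hia ?_⟩
      have h3 := huniq {0, i} ⟨hf, Finset.card_pair hi0.symm, by simp⟩
      have h4 : i ∈ ({0, a} : Finset (Fin (n + 1))) := by rw [← h3]; simp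
      simpa [hi0] using h4)
    rw [Finset.card_erase_of_mem (by simp [ha]), Finset.card_erase_of_mem (by simp)] at h2
    simp at h2
    omega
end

section
/- Let S = K[X_0,…,X_n] and let I ⊆ S be the ideal generated by the 2×2 minors of the 2×n matrix whose (1,j)-entry is X_{j−1} and (2,j)-entry is X_j for j = 1,…,n. If < is the lexicographic order with X_0 > X_1 > ⋯ > X_n, then in_<(I) = (X_i X_{j+1} : 0 ≤ i < j ≤ n−1); in particular in_<(I) = I_Δ where Δ is a path of length n (the graph on {0,…,n} with edges {i, i+1} for 0 ≤ i ≤ n−1). -/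
open MvPolynomial

/-- The path on `{0, …, n}` with edges `{i, i+1}`, as a simplicial complex: its faces are the
sets whose elements pairwise differ by at most one. -/
def pathComplex (n : ℕ) : SComplex n where
  faces := {s | ∀ i ∈ s, ∀ j ∈ s, (i : ℕ) ≤ (j : ℕ) + 1}
  down_closed := fun hs hts i hi j hj => hs i (hts hi) j (hts hj)

noncomputable def rncMap (K : Type*) [Field K] (n : ℕ) :
    MvPolynomial (Fin (n + 1)) K →ₐ[K] Polynomial (Polynomial K) :=
  aeval fun j => Polynomial.C (Polynomial.X ^ (j : ℕ)) * Polynomial.X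

theorem rncMap_monomial {K : Type*} [Field K] {n : ℕ} (e : Fin (n + 1) →₀ ℕ) (c : K) :
    rncMap K n (monomial e c) =
      Polynomial.C (Polynomial.C c * Polynomial.X ^ (∑ j : Fin (n + 1), (j : ℕ) * e j)) *
        Polynomial.X ^ (∑ j, e j) := by
  rw [rncMap, aeval_monomial, Finsupp.prod_fintype _ _ (by simp)]
  simp only [mul_pow, Finset.prod_mul_distrib, Finset.prod_pow_eq_pow_sum, ← map_pow, ← map_prod,
    ← pow_mul]
  rw [map_mul, mul_assoc]
  rfl

theorem rncMap_coeff {K : Type*} [Field K] {n : ℕ} (f : MvPolynomial (Fin (n + 1)) K) (d w : ℕ) :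
    ((rncMap K n f).coeff d).coeff w =
      ∑ e ∈ f.support, if (∑ j, e j = d ∧ ∑ j : Fin (n + 1), (j : ℕ) * e j = w) then f.coeff e else 0 := by
  conv_lhs => rw [f.as_sum]
  rw [map_sum, Polynomial.finsetSum_coeff, Polynomial.finsetSum_coeff]
  refine Finset.sum_congr rfl fun e _ => ?_
  rw [rncMap_monomial, Polynomial.coeff_C_mul_X_pow]
  by_cases h1 : d = ∑ j, e j
  · rw [if_pos h1, Polynomial.coeff_C_mul_X_pow]
    simp [h1, eq_comm]
  · rw [if_neg h1, if_neg (fun h => h1 h.1.symm)]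
    simp

/-- Monomials supported on an edge are lex-minimal in their fibre. -/
theorem rnc_fibre {n : ℕ} (a b : Fin (n + 1) →₀ ℕ)
    (ha : ∀ k j : Fin (n + 1), (k : ℕ) + 2 ≤ j → a k ≠ 0 → a j = 0)
    (h1 : ∑ j, b j = ∑ j, a j) (h2 : ∑ j : Fin (n + 1), (j : ℕ) * b j = ∑ j : Fin (n + 1), (j : ℕ) * a j)
    (hlt : toLex b < toLex a) : False := by
  obtain ⟨k, hk, hlt⟩ := Finsupp.Lex.lt_iff.1 hlt
  simp only [ofLex_toLex] at hk hlt
  have key : ∑ j : Fin (n + 1), ((j : ℤ) - k - 1) * a j < ∑ j : Fin (n + 1), ((j : ℤ) - k - 1) * b j := by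
    apply Finset.sum_lt_sum
    · intro j _
      rcases lt_trichotomy j k with h | h | h
      · rw [hk j h]
      · subst h
        simp only [sub_self, zero_sub, neg_mul, one_mul]
        omega
      · have h' : (k : ℕ) < j := h
        by_cases h3 : (j : ℕ) = k + 1
        · simp [h3]
        · rw [ha k j (by omega) (by omega)]
          have : (0 : ℤ) ≤ (j : ℤ) - k - 1 := by omega
          simp only [Nat.cast_zero, mul_zero]
          positivity
    · refine ⟨k, Finset.mem_univ _, ?_⟩
      simp only [sub_self, zero_sub, neg_mul, one_mul]
      omega
  have h1' : ∑ j, (b j : ℤ) = ∑ j, (a j : ℤ) := by exact_mod_cast h1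
  have h2' : ∑ j : Fin (n + 1), (j : ℤ) * b j = ∑ j : Fin (n + 1), (j : ℤ) * a j := by
    exact_mod_cast h2
  simp only [sub_mul, Finset.sum_sub_distrib, ← Finset.mul_sum, h1', h2'] at key
  exact lt_irrefl _ key

theorem rncMap_gen {K : Type*} [Field K] {n : ℕ} (j k : Fin n) :
    rncMap K n (X (Fin.castSucc j) * X (Fin.succ k) - X (Fin.succ j) * X (Fin.castSucc k)) = 0 := by
  simp only [rncMap, map_sub, map_mul, aeval_X, Fin.val_castSucc, Fin.val_succ, map_pow]
  ring

theorem rnc_mdeg {K : Type*} [Field K] {n : ℕ} (j k : Fin n) (h : j < k) :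
    MonomialOrder.lex.mdeg
      (X (Fin.castSucc j) * X (Fin.succ k) - X (Fin.succ j) * X (Fin.castSucc k) :
        MvPolynomial (Fin (n + 1)) K) =
      Finsupp.single (Fin.castSucc j) 1 + Finsupp.single (Fin.succ k) 1 := by
  have h1 : MonomialOrder.lex.degree (X (Fin.castSucc j) * X (Fin.succ k) :
      MvPolynomial (Fin (n + 1)) K) =
      Finsupp.single (Fin.castSucc j) 1 + Finsupp.single (Fin.succ k) 1 := by
    rw [MonomialOrder.degree_mul (X_ne_zero _) (X_ne_zero _), MonomialOrder.degree_X,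
      MonomialOrder.degree_X]
  have h2 : MonomialOrder.lex.degree (X (Fin.succ j) * X (Fin.castSucc k) :
      MvPolynomial (Fin (n + 1)) K) =
      Finsupp.single (Fin.succ j) 1 + Finsupp.single (Fin.castSucc k) 1 := by
    rw [MonomialOrder.degree_mul (X_ne_zero _) (X_ne_zero _), MonomialOrder.degree_X,
      MonomialOrder.degree_X]
  change MonomialOrder.lex.degree _ = _
  rw [MonomialOrder.degree_sub_of_lt, h1]
  rw [h1, h2, MonomialOrder.lex_lt_iff, Finsupp.Lex.lt_iff]
  have hjk : (j : ℕ) < k := h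
  refine ⟨Fin.castSucc j, ?_, ?_⟩
  · intro i hi
    have hi' : (i : ℕ) < j := hi
    simp only [ofLex_toLex, Finsupp.add_apply, Finsupp.single_apply, Fin.ext_iff, Fin.val_castSucc,
      Fin.val_succ]
    split_ifs <;> omega
  · simp only [ofLex_toLex, Finsupp.add_apply, Finsupp.single_apply, Fin.ext_iff, Fin.val_castSucc,
      Fin.val_succ]
    split_ifs <;> omega

theorem rnc_XX {K : Type*} [Field K] {n : ℕ} (i j : Fin (n + 1)) :
    (X i * X j : MvPolynomial (Fin (n + 1)) K) =
      monomial (Finsupp.single i 1 + Finsupp.single j 1) 1 := by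
  simp [X, monomial_mul]

theorem rnc_mem {K : Type*} [Field K] {n : ℕ} (i j : Fin (n + 1)) (h : (i : ℕ) + 2 ≤ j) :
    (X i * X j : MvPolynomial (Fin (n + 1)) K) ∈
      Ideal.span {g : MvPolynomial (Fin (n + 1)) K | ∃ i j : Fin n, i < j ∧
          g = X (Fin.castSucc i) * X (Fin.succ j)} := by
  have hj := j.2
  refine Ideal.subset_span ⟨⟨i, by omega⟩, ⟨(j : ℕ) - 1, by omega⟩, ?_, ?_⟩
  · rw [Fin.lt_def]
    simp only
    omega
  · congr 2
    ext
    simp only [Fin.val_succ]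
    omega

theorem rnc_sr {K : Type*} [Field K] {n : ℕ} :
    Ideal.span {g : MvPolynomial (Fin (n + 1)) K | ∃ i j : Fin n, i < j ∧
          g = X (Fin.castSucc i) * X (Fin.succ j)} = (pathComplex n).srIdeal K := by
  apply le_antisymm
  · rw [Ideal.span_le]
    rintro _ ⟨i, j, hij, rfl⟩
    have hij' : (i : ℕ) < j := hij
    refine Ideal.subset_span ⟨{Fin.castSucc i, Fin.succ j}, ?_, ?_⟩
    · intro hs
      have := hs (Fin.succ j) (by simp) (Fin.castSucc i) (by simp)
      simp only [Fin.val_succ, Fin.val_castSucc] at this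
      omega
    · rw [Finset.prod_pair]
      intro h
      have := congrArg Fin.val h
      simp only [Fin.val_succ, Fin.val_castSucc] at this
      omega
  · rw [SComplex.srIdeal, Ideal.span_le]
    rintro _ ⟨s, hs, rfl⟩
    simp only [pathComplex, Set.mem_ofPred_eq, not_forall, not_le] at hs
    obtain ⟨j, hj, i, hi, hlt⟩ := hs
    refine Ideal.mem_of_dvd _ ?_ (rnc_mem i j (by omega))
    rw [← Finset.prod_pair (f := fun i => (X i : MvPolynomial (Fin (n + 1)) K))
      (by rintro rfl; omega)]
    apply Finset.prod_dvd_prod_of_subset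
    intro x hx
    simp only [Finset.mem_insert, Finset.mem_singleton] at hx
    rcases hx with rfl | rfl <;> assumption

theorem rnc_main {K : Type*} [Field K] {n : ℕ} (f : MvPolynomial (Fin (n + 1)) K)
    (hf : rncMap K n f = 0) (h0 : f ≠ 0) :
    monomial (MonomialOrder.lex.mdeg f) (1 : K) ∈
      Ideal.span {g : MvPolynomial (Fin (n + 1)) K | ∃ i j : Fin n, i < j ∧
          g = X (Fin.castSucc i) * X (Fin.succ j)} := by
  change monomial (MonomialOrder.lex.degree f) (1 : K) ∈ _
  set a := MonomialOrder.lex.degree f with ha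
  by_cases h : ∀ k j : Fin (n + 1), (k : ℕ) + 2 ≤ j → a k ≠ 0 → a j = 0
  · exfalso
    have hc := rncMap_coeff f (∑ j, a j) (∑ j : Fin (n + 1), (j : ℕ) * a j)
    rw [hf, Polynomial.coeff_zero, Polynomial.coeff_zero, Finset.sum_eq_single a] at hc
    · rw [if_pos ⟨rfl, rfl⟩] at hc
      exact MonomialOrder.coeff_degree_ne_zero_iff.2 h0 hc.symm
    · intro b hb hba
      rw [if_neg]
      rintro ⟨h1, h2⟩
      have hle := MonomialOrder.lex_le_iff.1 (MonomialOrder.le_degree (m := MonomialOrder.lex) hb)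
      exact rnc_fibre a b h h1 h2 (lt_of_le_of_ne hle (fun h => hba (toLex.injective h)))
    · intro hna
      rw [notMem_support_iff.1 hna, ite_self]
  · push Not at h
    obtain ⟨k, j, hkj, hk, hj⟩ := h
    refine Ideal.mem_of_dvd _ ?_ (rnc_mem k j hkj)
    rw [rnc_XX, monomial_dvd_monomial]
    refine ⟨Or.inr ?_, dvd_rfl⟩
    intro x
    simp only [Finsupp.add_apply, Finsupp.single_apply, Fin.ext_iff]
    split_ifs with h3 h4 h4
    · omega
    · obtain rfl := Fin.ext h3
      omega
    · obtain rfl := Fin.ext h4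
      omega
    · omega

/-- **Statement 13.** Let `I` be the ideal of `2 × 2` minors of the matrix with rows
`(X_0, …, X_{n-1})` and `(X_1, …, X_n)` (defining the rational normal curve of degree `n`).
For the lexicographic order with `X_0 > X_1 > ⋯ > X_n`, the initial ideal of `I` is
`(X_i X_{j+1} : 0 ≤ i < j ≤ n-1)`, which is the Stanley–Reisner ideal of the path on
`{0, …, n}`. -/
theorem initialIdeal_rationalNormalCurve {K : Type*} [Field K] {n : ℕ}
    (I : Ideal (MvPolynomial (Fin (n + 1)) K))
    (hI : I = Ideal.span {f | ∃ j k : Fin n, j < k ∧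
      f = X (Fin.castSucc j) * X (Fin.succ k) - X (Fin.succ j) * X (Fin.castSucc k)}) :
    initialIdeal MonomialOrder.lex I =
        Ideal.span {g | ∃ i j : Fin n, i < j ∧
          g = X (Fin.castSucc i) * X (Fin.succ j)} ∧
      initialIdeal MonomialOrder.lex I = (pathComplex n).srIdeal K := by
  have key : initialIdeal MonomialOrder.lex I =
        Ideal.span {g | ∃ i j : Fin n, i < j ∧
          g = X (Fin.castSucc i) * X (Fin.succ j)} := by
    apply le_antisymm
    · rw [initialIdeal, Ideal.span_le]
      rintro _ ⟨f, hf, h0, rfl⟩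
      refine rnc_main f ?_ h0
      have hle : I ≤ RingHom.ker (rncMap K n) := by
        rw [hI, Ideal.span_le]
        rintro _ ⟨j, k, _, rfl⟩
        exact rncMap_gen j k
      exact hle hf
    · rw [Ideal.span_le]
      rintro _ ⟨i, j, hij, rfl⟩
      refine Ideal.subset_span ⟨X (Fin.castSucc i) * X (Fin.succ j) - X (Fin.succ i) * X (Fin.castSucc j),
        by rw [hI]; exact Ideal.subset_span ⟨i, j, hij, rfl⟩, ?_, ?_⟩
      · intro h
        have h1 := rnc_mdeg (K := K) i j hij
        rw [h] at h1
        have h2 : MonomialOrder.lex.degree (0 : MvPolynomial (Fin (n + 1)) K) = _ := h1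
        rw [MonomialOrder.degree_zero] at h2
        have h3 := DFunLike.congr_fun h2 (Fin.castSucc i)
        simp at h3
        omega
      · rw [rnc_mdeg i j hij, rnc_XX]
  exact ⟨key, key.trans rnc_sr⟩
end

section
/- Let K be any field, S = K[X_0, X_1, X_2, X_3], and let J ⊆ S be the ideal generated by the 2×2 minors of the 2×3 matrix with first row (X_1+X_2+X_3, X_1+X_3, X_1) and second row (X_1+X_3, X_1, X_0+X_1). Then for every monomial order < with X_0 > X_1 > X_2 > X_3, in_<(J) = (X_0X_1, X_0X_2, X_1X_2); i.e., in_<(J) = I_Δ where Δ is the tree on {0,1,2,3} with edges {0,3}, {1,3}, {2,3}. -/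
open MvPolynomial

/-- The tree (star) on `{0, 1, 2, 3}` with edges `{0,3}`, `{1,3}`, `{2,3}`. -/
def starTree : SComplex 3 where
  faces := {s | s ⊆ {0, 3} ∨ s ⊆ {1, 3} ∨ s ⊆ {2, 3}}
  down_closed := by
    intro s t hs hts
    rcases hs with h | h | h
    exacts [Or.inl (hts.trans h), Or.inr (Or.inl (hts.trans h)),
      Or.inr (Or.inr (hts.trans h))]


theorem aux_val {K ι : Type*} [Field K] [DecidableEq ι] (T : Finset ι) (f u : ι → Polynomial K)
    (v : ι → ℕ) (a : K) (e : ι) (he : e ∈ T) (hsum : ∑ i ∈ T, f i = 0)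
    (hf : ∀ i ∈ T, f i = (Polynomial.X - Polynomial.C a) ^ v i * u i)
    (hv : ∀ i ∈ T, i ≠ e → v e < v i) : (u e).eval a = 0 := by
  have h1 : (Polynomial.X - Polynomial.C a) ^ (v e + 1) ∣ ∑ i ∈ T.erase e, f i := by
    refine Finset.dvd_sum fun i hi => ?_
    rw [Finset.mem_erase] at hi
    rw [hf i hi.2]
    exact Dvd.dvd.mul_right (pow_dvd_pow _ (hv i hi.2 hi.1)) _
  rw [← Finset.add_sum_erase _ _ he] at hsum
  have h2 : (Polynomial.X - Polynomial.C a) ^ (v e + 1) ∣ f e := by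
    rw [eq_neg_of_add_eq_zero_left hsum]
    exact (dvd_neg).2 h1
  rw [hf e he, pow_succ] at h2
  have h3 := (mul_dvd_mul_iff_left (pow_ne_zero _ (Polynomial.X_sub_C_ne_zero a))).1 h2
  exact Polynomial.dvd_iff_isRoot.1 h3

noncomputable def auxPt (K : Type*) [Field K] : Fin 4 → Polynomial K :=
  ![Polynomial.X ^ 2 * (Polynomial.X + 1), - Polynomial.X ^ 2, - (Polynomial.X + 1),
    Polynomial.X * (Polynomial.X + 1)]

noncomputable def auxPhi (K : Type*) [Field K] :
    MvPolynomial (Fin 4) K →ₐ[K] Polynomial (Polynomial K) :=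
  aeval fun i => Polynomial.C (auxPt K i) * Polynomial.X

theorem aux_coeff {K : Type*} [Field K] (r : MvPolynomial (Fin 4) K) (n : ℕ) :
    (auxPhi K r).coeff n = ∑ e ∈ r.support with e 0 + e 1 + e 2 + e 3 = n,
      Polynomial.C (r.coeff e) * (auxPt K 0 ^ e 0 * auxPt K 1 ^ e 1 * auxPt K 2 ^ e 2 *
        auxPt K 3 ^ e 3) := by
  have : auxPhi K r = ∑ e ∈ r.support, Polynomial.C (Polynomial.C (r.coeff e) *
      (auxPt K 0 ^ e 0 * auxPt K 1 ^ e 1 * auxPt K 2 ^ e 2 * auxPt K 3 ^ e 3)) *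
        Polynomial.X ^ (e 0 + e 1 + e 2 + e 3) := by
    rw [auxPhi, aeval_def, eval₂_eq']
    refine Finset.sum_congr rfl fun e _ => ?_
    rw [Fin.prod_univ_four]
    have : (algebraMap K (Polynomial (Polynomial K))) (r.coeff e)
        = Polynomial.C (Polynomial.C (r.coeff e)) := rfl
    rw [this]
    simp only [map_mul, map_pow]
    ring
  rw [this, Polynomial.finsetSum_coeff, Finset.sum_filter]
  refine Finset.sum_congr rfl fun e _ => ?_
  rw [Polynomial.coeff_C_mul_X_pow]
  simp [eq_comm]

theorem aux_std {K : Type*} [Field K] (r : MvPolynomial (Fin 4) K) (hr : auxPhi K r = 0)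
    (hs : ∀ e ∈ r.support, (e 0 = 0 ∨ e 1 = 0) ∧ (e 0 = 0 ∨ e 2 = 0) ∧ (e 1 = 0 ∨ e 2 = 0)) :
    r = 0 := by
  classical
  have key : ∀ n, ∑ e ∈ r.support with e 0 + e 1 + e 2 + e 3 = n,
      Polynomial.C (r.coeff e) * (auxPt K 0 ^ e 0 * auxPt K 1 ^ e 1 * auxPt K 2 ^ e 2 *
        auxPt K 3 ^ e 3) = 0 := by
    intro n
    rw [← aux_coeff, hr, Polynomial.coeff_zero]
  have s1 : ∀ e ∈ r.support, e 1 = 0 := by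
    by_contra! hcon
    obtain ⟨e', he', h1⟩ := hcon
    obtain ⟨e, he, hmax⟩ := Finset.exists_max_image
      {e ∈ r.support | e 0 + e 1 + e 2 + e 3 = e' 0 + e' 1 + e' 2 + e' 3} (fun e => e 1)
      ⟨e', by simpa using he'⟩
    have hge := hmax e' (by simpa using he')
    have := aux_val _ _ (fun e => Polynomial.C (r.coeff e) * (Polynomial.X ^ (2 * e 0 + 2 * e 1 + e 3)
      * (-1) ^ (e 1 + e 2))) (fun e => e 0 + e 2 + e 3) (-1) e he (key _) ?_ ?_
    · rw [Finset.mem_filter, mem_support_iff] at he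
      simp at this
      exact he.1 this
    · intro i _
      simp only [auxPt, Matrix.cons_val, map_neg, map_one, sub_neg_eq_add]
      rw [neg_pow ((Polynomial.X : Polynomial K) ^ 2), neg_pow ((Polynomial.X : Polynomial K) + 1), mul_pow, mul_pow Polynomial.X]
      ring
    · intro i hi hne
      have hle := hmax i hi
      rw [Finset.mem_filter] at hi he
      have hsi := hs i hi.1
      have hse := hs e he.1
      by_contra hlt
      apply hne
      ext j
      fin_cases j <;> simp <;> omega
  by_contra hne
  obtain ⟨e', he'⟩ := Finset.nonempty_iff_ne_empty.2 (mt support_eq_empty.1 hne)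
  obtain ⟨e, he, hmin⟩ := Finset.exists_min_image
      {e ∈ r.support | e 0 + e 1 + e 2 + e 3 = e' 0 + e' 1 + e' 2 + e' 3}
      (fun e => 2 * e 0 + 2 * e 1 + e 3)
      ⟨e', by simpa using he'⟩
  have := aux_val _ _ (fun e => Polynomial.C (r.coeff e) * ((Polynomial.X + 1) ^ (e 0 + e 2 + e 3)
      * (-1) ^ (e 1 + e 2))) (fun e => 2 * e 0 + 2 * e 1 + e 3) 0 e he (key _) ?_ ?_
  · rw [Finset.mem_filter, mem_support_iff] at he
    simp at this
    exact he.1 this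
  · intro i _
    simp only [auxPt, Matrix.cons_val, map_zero, sub_zero]
    rw [neg_pow ((Polynomial.X : Polynomial K) ^ 2), neg_pow ((Polynomial.X : Polynomial K) + 1), mul_pow, mul_pow Polynomial.X]
    ring
  · intro i hi hne
    have hle := hmin i hi
    rw [Finset.mem_filter] at hi he
    have hsi := hs i hi.1
    have hse := hs e he.1
    have := s1 i hi.1
    have := s1 e he.1
    by_contra hlt
    apply hne
    ext j
    fin_cases j <;> simp <;> omega

open scoped MonomialOrder in
theorem aux_lead {σ K : Type*} [Field K] (m : MonomialOrder σ) (d : σ →₀ ℕ)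
    (q : MvPolynomial σ K) (hq : m.degree q ≺[m] d) :
    m.degree (monomial d 1 + q) = d ∧ m.leadingCoeff (monomial d 1 + q) = 1 := by
  classical
  have hd : m.degree (monomial d (1 : K)) = d := by
    rw [MonomialOrder.degree_monomial, if_neg one_ne_zero]
  constructor
  · rw [MonomialOrder.degree_add_of_lt (by rwa [hd]), hd]
  · rw [MonomialOrder.leadingCoeff_add_of_lt (by rwa [hd]), MonomialOrder.leadingCoeff_monomial]

noncomputable def auxD (i j : Fin 4) : Fin 4 →₀ ℕ := Finsupp.single i 1 + Finsupp.single j 1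

theorem aux_XX {K : Type*} [Field K] (i j : Fin 4) :
    (X i * X j : MvPolynomial (Fin 4) K) = monomial (auxD i j) 1 := by
  simp [auxD, X, monomial_mul]

theorem aux_lead2 {K : Type*} [Field K] (m : MonomialOrder (Fin 4)) (d a b : Fin 4 →₀ ℕ)
    (α β : K) (ha : m.toSyn a < m.toSyn d) (hb : m.toSyn b < m.toSyn d) :
    m.degree (monomial d 1 + (monomial a α + monomial b β)) = d ∧
    m.leadingCoeff (monomial d 1 + (monomial a α + monomial b β)) = 1 := by
  apply aux_lead
  refine lt_of_le_of_lt MonomialOrder.degree_add_le ?_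
  exact max_lt (lt_of_le_of_lt (MonomialOrder.degree_monomial_le _) ha)
    (lt_of_le_of_lt (MonomialOrder.degree_monomial_le _) hb)

/-- Leading exponents. -/
noncomputable def auxE : Fin 3 → (Fin 4 →₀ ℕ) := ![auxD 0 1, auxD 0 2, auxD 1 2]

/-- Groebner basis. -/
noncomputable def auxB (K : Type*) [Field K] : Fin 3 → MvPolynomial (Fin 4) K :=
  ![X 0 * X 1 + (X 0 * X 3 + X 1 * X 3), X 0 * X 2 + X 3 * X 3,
    X 1 * X 2 + (- (X 1 * X 3) - X 3 * X 3)]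

theorem auxD_lt (m : MonomialOrder (Fin 4)) (hm : m.Descending) {i j k l : Fin 4}
    (h1 : k ≤ i) (h2 : l ≤ j) (h : k < i ∨ l < j) : m.toSyn (auxD i j) < m.toSyn (auxD k l) := by
  have hle : ∀ {i k : Fin 4}, k ≤ i →
      m.toSyn (Finsupp.single i 1) ≤ m.toSyn (Finsupp.single k 1) := by
    intro i k h
    rcases h.eq_or_lt with rfl | h
    · exact le_rfl
    · exact (hm _ _ h).le
  rw [auxD, auxD, map_add, map_add]
  rcases h with h | h
  · exact add_lt_add_of_lt_of_le (hm _ _ h) (hle h2)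
  · exact add_lt_add_of_le_of_lt (hle h1) (hm _ _ h)

theorem auxB_lead {K : Type*} [Field K] (m : MonomialOrder (Fin 4)) (hm : m.Descending)
    (i : Fin 3) : m.degree (auxB K i) = auxE i ∧ m.leadingCoeff (auxB K i) = 1 := by
  fin_cases i
  · have := aux_lead2 m (auxD 0 1) (auxD 0 3) (auxD 1 3) (1 : K) 1
      (auxD_lt m hm (by decide) (by decide) (by decide))
      (auxD_lt m hm (by decide) (by decide) (by decide))
    simpa [auxB, auxE, aux_XX] using this
  · have := aux_lead2 m (auxD 0 2) (auxD 3 3) (auxD 3 3) (1 : K) 0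
      (auxD_lt m hm (by decide) (by decide) (by decide))
      (auxD_lt m hm (by decide) (by decide) (by decide))
    simpa [auxB, auxE, aux_XX] using this
  · have := aux_lead2 m (auxD 1 2) (auxD 1 3) (auxD 3 3) (-1 : K) (-1)
      (auxD_lt m hm (by decide) (by decide) (by decide))
      (auxD_lt m hm (by decide) (by decide) (by decide))
    simpa [auxB, auxE, aux_XX, sub_eq_add_neg] using this

theorem auxPhi_B {K : Type*} [Field K] (i : Fin 3) : auxPhi K (auxB K i) = 0 := by
  fin_cases i <;> simp [auxPhi, auxB, auxPt] <;> ring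

theorem auxB_mem {K : Type*} [Field K] (i : Fin 3) : auxB K i ∈ (Ideal.span
      {(X 1 + X 2 + X 3) * (X 1) - (X 1 + X 3) * (X 1 + X 3),
       (X 1 + X 2 + X 3) * (X 0 + X 1) - (X 1 + X 3) * (X 1),
       (X 1 + X 3) * (X 0 + X 1) - (X 1) * (X 1)} : Ideal (MvPolynomial (Fin 4) K)) := by
  have h1 := Ideal.subset_span (α := MvPolynomial (Fin 4) K) (s :=
      {(X 1 + X 2 + X 3) * (X 1) - (X 1 + X 3) * (X 1 + X 3),
       (X 1 + X 2 + X 3) * (X 0 + X 1) - (X 1 + X 3) * (X 1),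
       (X 1 + X 3) * (X 0 + X 1) - (X 1) * (X 1)}) (Set.mem_insert _ _)
  have h2 := Ideal.subset_span (α := MvPolynomial (Fin 4) K) (s :=
      {(X 1 + X 2 + X 3) * (X 1) - (X 1 + X 3) * (X 1 + X 3),
       (X 1 + X 2 + X 3) * (X 0 + X 1) - (X 1 + X 3) * (X 1),
       (X 1 + X 3) * (X 0 + X 1) - (X 1) * (X 1)})
       (Set.mem_insert_of_mem _ (Set.mem_insert _ _))
  have h3 := Ideal.subset_span (α := MvPolynomial (Fin 4) K) (s :=
      {(X 1 + X 2 + X 3) * (X 1) - (X 1 + X 3) * (X 1 + X 3),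
       (X 1 + X 2 + X 3) * (X 0 + X 1) - (X 1 + X 3) * (X 1),
       (X 1 + X 3) * (X 0 + X 1) - (X 1) * (X 1)})
       (Set.mem_insert_of_mem _ (Set.mem_insert_of_mem _ rfl))
  fin_cases i
  · convert h3 using 1
    simp [auxB]; ring
  · convert Ideal.sub_mem _ (Ideal.sub_mem _ h2 h3) h1 using 1
    simp [auxB]; ring
  · convert h1 using 1
    simp [auxB]; ring

theorem auxE_le {c : Fin 4 →₀ ℕ} {i j : Fin 4} (hij : i ≠ j) (hi : c i ≠ 0) (hj : c j ≠ 0) :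
    auxD i j ≤ c := by
  intro k
  simp only [auxD, Finsupp.add_apply, Finsupp.single_apply]
  split_ifs <;> subst_vars <;> omega

theorem aux_main {K : Type*} [Field K] (m : MonomialOrder (Fin 4)) (hm : m.Descending)
    (f : MvPolynomial (Fin 4) K) (hf : f ≠ 0) (hφ : auxPhi K f = 0) :
    ∃ i, auxE i ≤ m.degree f := by
  obtain ⟨g, r, h1, h2, h3⟩ := m.div (b := auxB K)
    (fun i => by rw [(auxB_lead m hm i).2]; exact isUnit_one) f
  have hr : r = 0 := by
    apply aux_std
    · rw [h1, map_add, Finsupp.linearCombination_apply, Finsupp.sum, map_sum,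
        Finset.sum_eq_zero, zero_add] at hφ
      · exact hφ
      · intro i _
        rw [smul_eq_mul, map_mul, auxPhi_B, mul_zero]
    · intro e he
      have := h3 e he
      simp only [(auxB_lead m hm _).1] at this
      refine ⟨?_, ?_, ?_⟩
      · by_contra! h
        exact this 0 (auxE_le (by decide) h.1 h.2)
      · by_contra! h
        exact this 1 (auxE_le (by decide) h.1 h.2)
      · by_contra! h
        exact this 2 (auxE_le (by decide) h.1 h.2)
  rw [hr, add_zero, Finsupp.linearCombination_apply, Finsupp.sum] at h1
  have hc : f.coeff (m.degree f) ≠ 0 := MonomialOrder.leadingCoeff_ne_zero_iff.2 hf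
  have : ∃ i, (auxB K i * g i).coeff (m.degree f) ≠ 0 := by
    by_contra! h
    apply hc
    have h4 := congrArg (coeff (m.degree f)) h1
    rw [h4, coeff_sum]
    refine Finset.sum_eq_zero fun i _ => ?_
    rw [smul_eq_mul, mul_comm]
    exact h i
  obtain ⟨i, hi⟩ := this
  refine ⟨i, ?_⟩
  have hne : auxB K i * g i ≠ 0 := by
    intro h
    simp [h] at hi
  have heq : m.degree (auxB K i * g i) = m.degree f := by
    apply m.toSyn.injective
    exact le_antisymm (h2 i) (MonomialOrder.le_degree (mem_support_iff.2 hi))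
  rw [← heq, MonomialOrder.degree_mul (left_ne_zero_of_mul hne) (right_ne_zero_of_mul hne),
    (auxB_lead m hm i).1]
  exact le_self_add

theorem aux_sr {K : Type*} [Field K] :
    (Ideal.span {X 0 * X 1, X 0 * X 2, X 1 * X 2} : Ideal (MvPolynomial (Fin 4) K)) =
      starTree.srIdeal K := by
  apply le_antisymm
  · rw [Ideal.span_le]
    have aux : ∀ i j : Fin 4, i ≠ j → ({i, j} : Finset (Fin 4)) ∉ starTree.faces →
        (X i * X j : MvPolynomial (Fin 4) K) ∈ starTree.srIdeal K := fun i j hij h =>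
      Ideal.subset_span ⟨{i, j}, h, by rw [Finset.prod_pair hij]⟩
    rintro _ (rfl | rfl | rfl)
    · exact aux 0 1 (by decide) (by simp only [starTree, Set.mem_ofPred_eq]; decide)
    · exact aux 0 2 (by decide) (by simp only [starTree, Set.mem_ofPred_eq]; decide)
    · exact aux 1 2 (by decide) (by simp only [starTree, Set.mem_ofPred_eq]; decide)
  · rw [SComplex.srIdeal, Ideal.span_le]
    rintro _ ⟨s, hs, rfl⟩
    have h : ∀ s : Finset (Fin 4), ¬ (s ⊆ {0, 3} ∨ s ⊆ {1, 3} ∨ s ⊆ {2, 3}) →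
      {0, 1} ⊆ s ∨ {0, 2} ⊆ s ∨ {1, 2} ⊆ s := by decide
    have hd : ∀ i j : Fin 4, i ≠ j → ({i, j} : Finset (Fin 4)) ⊆ s →
        (X i * X j : MvPolynomial (Fin 4) K) ∣ ∏ i ∈ s, X i := by
      intro i j hij h
      rw [← Finset.prod_pair (f := fun i => (X i : MvPolynomial (Fin 4) K)) hij]
      exact Finset.prod_dvd_prod_of_subset _ _ _ h
    rcases h s hs with h | h | h
    · exact Ideal.mem_of_dvd _ (hd 0 1 (by decide) h) (Ideal.subset_span (by simp))
    · exact Ideal.mem_of_dvd _ (hd 0 2 (by decide) h) (Ideal.subset_span (by simp))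
    · exact Ideal.mem_of_dvd _ (hd 1 2 (by decide) h) (Ideal.subset_span (by simp))

/-- **Statement 14.** Over any field `K`, let `J ⊆ K[X_0, X_1, X_2, X_3]` be the ideal of
`2 × 2` minors of the matrix with rows `(X_1+X_2+X_3, X_1+X_3, X_1)` and
`(X_1+X_3, X_1, X_0+X_1)`. For every monomial order with `X_0 > X_1 > X_2 > X_3`, the initial
ideal of `J` is `(X_0X_1, X_0X_2, X_1X_2)`, i.e. the Stanley–Reisner ideal of the tree on
`{0,1,2,3}` with edges `{0,3}`, `{1,3}`, `{2,3}`. -/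
theorem initialIdeal_star_example {K : Type*} [Field K]
    (J : Ideal (MvPolynomial (Fin 4) K))
    (hJ : J = Ideal.span
      {(X 1 + X 2 + X 3) * (X 1) - (X 1 + X 3) * (X 1 + X 3),
       (X 1 + X 2 + X 3) * (X 0 + X 1) - (X 1 + X 3) * (X 1),
       (X 1 + X 3) * (X 0 + X 1) - (X 1) * (X 1)})
    (m : MonomialOrder (Fin 4)) (hm : m.Descending) :
    initialIdeal m J = Ideal.span {X 0 * X 1, X 0 * X 2, X 1 * X 2} ∧
      initialIdeal m J = starTree.srIdeal K := by
  suffices h : initialIdeal m J = Ideal.span {X 0 * X 1, X 0 * X 2, X 1 * X 2} from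
    ⟨h, h.trans aux_sr⟩
  have hE : ∀ i, (monomial (auxE i) (1 : K)) ∈
      (Ideal.span {X 0 * X 1, X 0 * X 2, X 1 * X 2} : Ideal (MvPolynomial (Fin 4) K)) := by
    intro i
    apply Ideal.subset_span
    fin_cases i <;> simp [auxE, aux_XX]
  apply le_antisymm
  · rw [initialIdeal, Ideal.span_le]
    rintro _ ⟨f, hf, hf0, rfl⟩
    have hker : J ≤ RingHom.ker (auxPhi K) := by
      rw [hJ, Ideal.span_le]
      rintro _ (rfl | rfl | rfl) <;>
      · simp [RingHom.mem_ker, auxPhi, auxPt]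
        ring
    obtain ⟨i, hi⟩ := aux_main m hm f hf0 (hker hf)
    refine Ideal.mem_of_dvd _ ?_ (hE i)
    change _ ∣ monomial (m.degree f) (1 : K)
    rw [monomial_dvd_monomial]
    exact ⟨Or.inr hi, dvd_rfl⟩
  · have hI : ∀ i, (monomial (auxE i) (1 : K)) ∈ initialIdeal m J := by
      intro i
      refine Ideal.subset_span ⟨auxB K i, hJ ▸ auxB_mem i, ?_, ?_⟩
      · intro h
        have := (auxB_lead (K := K) m hm i).2
        simp [h] at this
      · change _ = monomial (m.degree (auxB K i)) (1 : K)
        rw [(auxB_lead m hm i).1]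
    rw [Ideal.span_le]
    rintro _ (rfl | rfl | rfl)
    · rw [aux_XX]; exact hI 0
    · rw [aux_XX]; exact hI 1
    · rw [aux_XX]; exact hI 2
end
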